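/- arXiv:2307.15211 — 2 statements merged into one kernel-verified Lean document; each statement's English description precedes it below -/
import Mathlib

section
/- Let D_1, D_2, D_3, D_4 be the four chord diagrams of order n obtained from a common configuration as described. For every set A of chords with c' ∈ A and c ∉ A (regarding A as a set of chords of each D_i), the genera of the corresponding partial duals satisfy g_A(D_1) = g_A(D_2) and g_A(D_3) = g_A(D_4). -/
/-- Number of cycles (orbits, counting fixed points) of a self-map:
the number of connected components of its functional graph. For a permutation
this is the number of cycles, counting fixed points. -/
noncomputable def cycles {α : Type*} (f : α → α) : ℕ :=
  Nat.card (Quot fun i j => f i = j)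

-- `restrictTo σ A` agrees with `σ` on `A` and fixes everything else.
-- If `A` is the set of endpoints of a set of chords of `σ`, this is `σ_A`.
open Classical in
noncomputable def restrictTo {α : Type*} (f : α → α) (A : Set α) : α → α :=
  fun i => if i ∈ A then f i else i

/-- The rotation `i ↦ i + 1` of the `2n` points of a chord diagram. -/
def rot (n : ℕ) : ZMod (2 * n) → ZMod (2 * n) := fun i => i + 1

/-- Genus of the partial dual of the chord diagram `σ` relative to the set of
chords whose endpoint set is the (`σ`-invariant) set `A`. -/
noncomputable def pdGenus (n : ℕ) (σ : ZMod (2 * n) → ZMod (2 * n))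
    (A : Set (ZMod (2 * n))) : ℕ :=
  (n + 2 - cycles (rot n ∘ restrictTo σ A) - cycles (rot n ∘ restrictTo σ Aᶜ)) / 2

/-- Genus of the one-vertex ribbon graph of the chord diagram `σ`. -/
noncomputable def genus (n : ℕ) (σ : ZMod (2 * n) → ZMod (2 * n)) : ℕ :=
  (n + 1 - cycles (rot n ∘ σ)) / 2

/-- The partial-dual genus polynomial `∂Γ_σ(z) = Σ_A z^{g_A(σ)}`, the sum being
over all sets `A` of chords of `σ` (encoded as `σ`-invariant subsets of the
`2n` points). -/
noncomputable def pdPoly (n : ℕ) (σ : ZMod (2 * n) → ZMod (2 * n)) : Polynomial ℤ :=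
  if h : n = 0 then 1 else
    haveI : NeZero (2 * n) := ⟨by omega⟩
    ∑ A ∈ Finset.univ.filter (fun A : Finset (ZMod (2 * n)) => ∀ i ∈ A, σ i ∈ A),
      Polynomial.X ^ pdGenus n σ (↑A : Set (ZMod (2 * n)))

/-- `φ : ZMod (2n-1) → ZMod (2n)` is the cyclic-order-preserving identification of
the `2n-1` configuration points with the complement of the inserted point `x`:
it avoids `x` and each step advances by one position on the circle, skipping `x`. -/
def IsInsertion {m N : ℕ} (φ : ZMod m → ZMod N) (x : ZMod N) : Prop :=
  φ 0 ≠ x ∧ ∀ j, φ (j + 1) = if φ j + 1 = x then φ j + 2 else φ j + 1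

/-- A configuration of `2n-1` marked points on the circle: a distinguished chord
`c = {p, q}`, a distinguished unpaired point `u`, and a fixed-point-free pairing
of the remaining `2n-4` points into background chords; all encoded by the
involution `τ` whose unique fixed point is `u` and with `τ p = q`. -/
def IsConfig (n : ℕ) (τ : ZMod (2 * n - 1) → ZMod (2 * n - 1))
    (p q u : ZMod (2 * n - 1)) : Prop :=
  Function.Involutive τ ∧ τ p = q ∧ p ≠ q ∧ τ u = u ∧ ∀ j, τ j = j → j = u

/-- `D` is the chord diagram of order `n` obtained from the configuration `τ`
by inserting the extra point `x` (via the order-preserving identification `φ`)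
together with the new chord `c' = {x, u}`; all other chords are unchanged. -/
def IsInsertedDiagram (n : ℕ) (τ : ZMod (2 * n - 1) → ZMod (2 * n - 1))
    (u : ZMod (2 * n - 1)) (φ : ZMod (2 * n - 1) → ZMod (2 * n)) (x : ZMod (2 * n))
    (D : ZMod (2 * n) → ZMod (2 * n)) : Prop :=
  IsInsertion φ x ∧ (∀ j, j ≠ u → D (φ j) = φ (τ j)) ∧ D (φ u) = x ∧ D x = φ u

theorem cyc_map {α : Type*} (F G : α → α) (a : α) (hF : F a ≠ a)
    (h : ∀ b, b ≠ a → (F b = a → Quot.mk (fun i j => G i = j) b = Quot.mk _ (F a)) ∧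
      (F b ≠ a → Quot.mk (fun i j => G i = j) b = Quot.mk _ (F b))) :
    ∃ t : Quot (fun i j => F i = j) → Quot (fun i j => G i = j),
      (∀ b, b ≠ a → t (Quot.mk _ b) = Quot.mk _ b) ∧ t (Quot.mk _ a) = Quot.mk _ (F a) := by
  classical
  refine ⟨Quot.lift (fun b => if b = a then Quot.mk _ (F a) else Quot.mk _ b) ?_, ?_, ?_⟩
  · rintro b _ rfl
    by_cases hb : b = a
    · subst hb
      simp [hF]
    · by_cases hb' : F b = a
      · simp [hb, hb', (h b hb).1 hb']
      · simp [hb, hb', (h b hb).2 hb']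
  · intro b hb
    simp [hb]
  · simp

theorem cycles_bypass {α : Type*} (F G : α → α) (a : α) (hF : F a ≠ a) (hG : G a ≠ a)
    (h : ∀ b, b ≠ a → ∃ d, (d = F b ∧ F b ≠ a ∨ d = F a ∧ F b = a) ∧
      (d = G b ∧ G b ≠ a ∨ d = G a ∧ G b = a)) :
    cycles F = cycles G := by
  have key : ∀ (G : α → α) (b d : α), (d = G b ∧ G b ≠ a ∨ d = G a ∧ G b = a) →
      Quot.mk (fun i j => G i = j) b = Quot.mk _ d := by
    intro G b d hd
    have hs : ∀ c, Quot.mk (fun i j => G i = j) c = Quot.mk _ (G c) := fun c => Quot.sound rfl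
    rcases hd with ⟨rfl, _⟩ | ⟨rfl, h2⟩
    · exact hs b
    · rw [hs b, h2]; exact hs a
  obtain ⟨t, ht, hta⟩ := cyc_map F G a hF (fun b hb => by
    obtain ⟨d, h1, h2⟩ := h b hb
    have := key G b d h2
    grind)
  obtain ⟨s, hs, hsa⟩ := cyc_map G F a hG (fun b hb => by
    obtain ⟨d, h1, h2⟩ := h b hb
    have := key F b d h1
    grind)
  refine Nat.card_congr ⟨t, s, ?_, ?_⟩
  · rintro ⟨b⟩
    by_cases hb : b = a
    · subst hb
      rw [hta, hs _ hF]
      exact (Quot.sound (r := fun i j => F i = j) (a := b) rfl).symm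
    · rw [ht b hb, hs b hb]
  · rintro ⟨b⟩
    by_cases hb : b = a
    · subst hb
      rw [hsa, ht _ hG]
      exact (Quot.sound (r := fun i j => G i = j) (a := b) rfl).symm
    · rw [hs b hb, ht b hb]

theorem cycles_conj {α β : Type*} (e : α ≃ β) (F : α → α) (G : β → β)
    (h : ∀ a, G (e a) = e (F a)) : cycles F = cycles G := by
  refine Nat.card_congr (Quot.congr e ?_)
  intro a b
  rw [h, e.apply_eq_iff_eq]

/-- The map `Option (points) → ZMod (2n)` sending `none` to the inserted point. -/
def insMap {m N : ℕ} (φ : ZMod m → ZMod N) (x : ZMod N) : Option (ZMod m) → ZMod N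
  | none => x
  | some j => φ j

theorem insMap_bij (n : ℕ) (hn : 2 ≤ n) (φ : ZMod (2 * n - 1) → ZMod (2 * n)) (x : ZMod (2 * n))
    (h : IsInsertion φ x) (hs : ∃ j, x + 1 = φ j) : Function.Bijective (insMap φ x) := by
  haveI : NeZero (2 * n) := ⟨by omega⟩
  haveI : NeZero (2 * n - 1) := ⟨by omega⟩
  rw [Fintype.bijective_iff_surjective_and_card]
  constructor
  · have step : ∀ y, y ∈ Set.range (insMap φ x) → y + 1 ∈ Set.range (insMap φ x) := by
      rintro _ ⟨_ | j, rfl⟩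
      · obtain ⟨j, hj⟩ := hs
        exact ⟨some j, hj.symm⟩
      · by_cases hj : φ j + 1 = x
        · exact ⟨none, hj.symm⟩
        · refine ⟨some (j + 1), ?_⟩
          have := h.2 j
          rw [if_neg hj] at this
          exact this
    have all : ∀ k : ℕ, x + k ∈ Set.range (insMap φ x) := by
      intro k
      induction k with
      | zero => exact ⟨none, by simp [insMap]⟩
      | succ k ih =>
        have := step _ ih
        rw [Nat.cast_succ, ← add_assoc]
        exact this
    intro y
    have := all (y - x).val
    rw [ZMod.natCast_zmod_val] at this
    simpa using this
  · rw [Fintype.card_option, ZMod.card, ZMod.card]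
    omega

/-- `r ∘ σ_A` on `Option`, for a successor map `S`. -/
noncomputable def fA {M : Type*} (S : Option M → Option M) (τ : M → M) (u : M) (B : Set M) :
    Option M → Option M := by
  classical exact fun o => match o with
  | none => S (some u)
  | some j => if j ∈ B then (if j = u then S none else S (some (τ j))) else S (some j)

/-- `r ∘ σ_{A^c}` on `Option`, for a successor map `S`. -/
noncomputable def fAc {M : Type*} (S : Option M → Option M) (τ : M → M) (B : Set M) :
    Option M → Option M := by
  classical exact fun o => match o with
  | none => S none
  | some j => if j ∈ B then S (some j) else S (some (τ j))

theorem cycles_ins (n : ℕ) (τ : ZMod (2 * n - 1) → ZMod (2 * n - 1)) (u : ZMod (2 * n - 1))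
    (φ : ZMod (2 * n - 1) → ZMod (2 * n)) (x : ZMod (2 * n)) (D : ZMod (2 * n) → ZMod (2 * n))
    (h : IsInsertedDiagram n τ u φ x D) (hb : Function.Bijective (insMap φ x))
    (S : Option (ZMod (2 * n - 1)) → Option (ZMod (2 * n - 1)))
    (hS : ∀ o, insMap φ x o + 1 = insMap φ x (S o))
    (B : Set (ZMod (2 * n - 1))) (hu : u ∈ B) :
    cycles (rot n ∘ restrictTo D (φ '' B ∪ {x})) = cycles (fA S τ u B) ∧
    cycles (rot n ∘ restrictTo D (φ '' B ∪ {x})ᶜ) = cycles (fAc S τ B) := by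
  obtain ⟨_, hD, hDu, hDx⟩ := h
  have hne : ∀ j, φ j ≠ x := fun j hj => by
    have := @hb.1 (some j) none hj
    cases this
  have hinj : ∀ i j, φ i = φ j → i = j := fun i j hij => by
    have := @hb.1 (some i) (some j) hij
    exact Option.some.inj this
  have hmem : ∀ j, φ j ∈ φ '' B ∪ {x} ↔ j ∈ B := by
    intro j
    constructor
    · rintro (⟨i, hi, hij⟩ | hj)
      · exact hinj _ _ hij ▸ hi
      · exact absurd hj (hne j)
    · exact fun hj => Or.inl ⟨j, hj, rfl⟩
  have hxm : x ∈ φ '' B ∪ {x} := Or.inr rfl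
  have hSn : x + 1 = insMap φ x (S none) := hS none
  have hSs : ∀ j, φ j + 1 = insMap φ x (S (some j)) := fun j => hS (some j)
  constructor
  · symm
    apply cycles_conj (Equiv.ofBijective _ hb)
    rintro (_ | j)
    · show restrictTo D _ x + 1 = insMap φ x (S (some u))
      rw [restrictTo, if_pos hxm, hDx, hSs]
    · show restrictTo D _ (φ j) + 1 = insMap φ x (fA S τ u B (some j))
      by_cases hj : j ∈ B
      · rw [restrictTo, if_pos ((hmem j).2 hj)]
        by_cases hju : j = u
        · subst hju
          simp [fA, hj, hDu, hSn]
        · simp [fA, hj, hju, hD j hju, hSs]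
      · rw [restrictTo, if_neg (fun hh => hj ((hmem j).1 hh))]
        simp [fA, hj, hSs]
  · symm
    apply cycles_conj (Equiv.ofBijective _ hb)
    rintro (_ | j)
    · show restrictTo D _ x + 1 = insMap φ x (S none)
      rw [restrictTo, if_neg (fun hh => hh hxm), hSn]
    · show restrictTo D _ (φ j) + 1 = insMap φ x (fAc S τ B (some j))
      by_cases hj : j ∈ B
      · rw [restrictTo, if_neg (fun hh => hh ((hmem j).2 hj))]
        simp [fAc, hj, hSs]
      · have hm : φ j ∈ (φ '' B ∪ {x})ᶜ := fun hh => hj ((hmem j).1 hh)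
        rw [restrictTo, if_pos hm]
        have hju : j ≠ u := fun hh => hj (hh ▸ hu)
        simp [fAc, hj, hD j hju, hSs]

theorem pdGenus_pair (n : ℕ) (hn : 2 ≤ n)
    (τ : ZMod (2 * n - 1) → ZMod (2 * n - 1)) (p u : ZMod (2 * n - 1))
    (hτ : Function.Involutive τ)
    (φ₁ φ₂ : ZMod (2 * n - 1) → ZMod (2 * n))
    (x₁ x₂ : ZMod (2 * n))
    (D₁ D₂ : ZMod (2 * n) → ZMod (2 * n))
    (h₁ : IsInsertedDiagram n τ u φ₁ x₁ D₁) (hx₁ : x₁ + 1 = φ₁ p)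
    (h₂ : IsInsertedDiagram n τ u φ₂ x₂ D₂) (hx₂ : x₂ = φ₂ p + 1)
    (B : Set (ZMod (2 * n - 1))) (hB : ∀ j ∈ B, τ j ∈ B)
    (hc : p ∉ B) (hc' : u ∈ B) :
    pdGenus n D₁ (φ₁ '' B ∪ {x₁}) = pdGenus n D₂ (φ₂ '' B ∪ {x₂}) := by
  classical
  haveI : Fact (1 < 2 * n - 1) := ⟨by omega⟩
  have hp1 : ∀ j : ZMod (2 * n - 1), j + 1 ≠ j := fun j hj => by
    simp at hj
  have hx₂' : x₂ + 1 = φ₂ (p + 1) := by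
    have := h₂.1.2 p
    rw [if_pos hx₂.symm] at this
    rw [this, hx₂]; ring
  have b₁ := insMap_bij n hn φ₁ x₁ h₁.1 ⟨p, hx₁⟩
  have b₂ := insMap_bij n hn φ₂ x₂ h₂.1 ⟨p + 1, hx₂'⟩
  let S₁ : Option (ZMod (2 * n - 1)) → Option (ZMod (2 * n - 1)) := fun o => match o with
    | none => some p
    | some j => if j + 1 = p then none else some (j + 1)
  let S₂ : Option (ZMod (2 * n - 1)) → Option (ZMod (2 * n - 1)) := fun o => match o with
    | none => some (p + 1)
    | some j => if j = p then none else some (j + 1)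
  have hS₁ : ∀ o, insMap φ₁ x₁ o + 1 = insMap φ₁ x₁ (S₁ o) := by
    rintro (_ | j)
    · exact hx₁
    · have hj := h₁.1.2 j
      by_cases hjp : j + 1 = p
      · have : φ₁ j + 1 = x₁ := by
          by_contra hne
          rw [if_neg hne, hjp, ← hx₁] at hj
          have h3 : insMap φ₁ x₁ none = insMap φ₁ x₁ (some j) := add_right_cancel hj
          cases b₁.1 h3
        simp [S₁, hjp, insMap, this]
      · have : φ₁ j + 1 ≠ x₁ := by
          intro he
          rw [if_pos he] at hj
          have h3 : insMap φ₁ x₁ (some (j + 1)) = insMap φ₁ x₁ (some p) := by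
            show φ₁ (j + 1) = φ₁ p
            rw [hj, ← hx₁, ← he]; ring
          exact hjp (Option.some.inj (b₁.1 h3))
        rw [if_neg this] at hj
        simp [S₁, hjp, insMap, hj]
  have hS₂ : ∀ o, insMap φ₂ x₂ o + 1 = insMap φ₂ x₂ (S₂ o) := by
    rintro (_ | j)
    · exact hx₂'
    · have hj := h₂.1.2 j
      by_cases hjp : j = p
      · simp [S₂, hjp, insMap, hx₂]
      · have : φ₂ j + 1 ≠ x₂ := by
          intro he
          rw [hx₂] at he
          have h3 : insMap φ₂ x₂ (some j) = insMap φ₂ x₂ (some p) := add_right_cancel he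
          exact hjp (Option.some.inj (b₂.1 h3))
        rw [if_neg this] at hj
        simp [S₂, hjp, insMap, hj]
  obtain ⟨c₁, d₁⟩ := cycles_ins n τ u φ₁ x₁ D₁ h₁ b₁ S₁ hS₁ B hc'
  obtain ⟨c₂, d₂⟩ := cycles_ins n τ u φ₂ x₂ D₂ h₂ b₂ S₂ hS₂ B hc'
  have hup : u ≠ p := fun h => hc (h ▸ hc')
  have e₁ : cycles (fA S₁ τ u B) = cycles (fA S₂ τ u B) := by
    have F1p : fA S₁ τ u B (some p) = some (p + 1) := by simp [fA, hc, S₁, hp1]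
    have F2p : fA S₂ τ u B (some p) = none := by simp [fA, hc, S₂]
    have main : ∀ k, k ≠ p → ∃ d, (d = S₁ (some k) ∧ S₁ (some k) ≠ some p ∨
        d = some (p + 1) ∧ S₁ (some k) = some p) ∧
        (d = S₂ (some k) ∧ S₂ (some k) ≠ some p ∨ d = none ∧ S₂ (some k) = some p) := by
      intro k hk
      by_cases hkp : k + 1 = p
      · exact ⟨none, by simp [S₁, S₂, hk, hkp]⟩
      · exact ⟨some (k + 1), by simp [S₁, S₂, hk, hkp]⟩
    refine cycles_bypass _ _ (some p) (by simp [F1p, hp1]) (by simp [F2p]) ?_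
    rw [F1p, F2p]
    rintro (_ | j) hj
    · exact main u hup
    · have hjp : j ≠ p := fun h => hj (by rw [h])
      by_cases hjB : j ∈ B
      · by_cases hju : j = u
        · refine ⟨some (p + 1), ?_⟩
          simp [fA, hju, hc', S₁, S₂, hp1]
        · have := main (τ j) (fun h => hc (h ▸ hB j hjB))
          simpa only [fA, hjB, hju, if_true, if_false] using this
      · simpa only [fA, hjB, if_false] using main j hjp
  have e₂ : cycles (fAc S₁ τ B) = cycles (fAc S₂ τ B) := by
    have main : ∀ k, ∃ d, (d = S₁ (some k) ∧ S₁ (some k) ≠ none ∨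
        d = some p ∧ S₁ (some k) = none) ∧
        (d = S₂ (some k) ∧ S₂ (some k) ≠ none ∨ d = some (p + 1) ∧ S₂ (some k) = none) := by
      intro k
      refine ⟨some (k + 1), ?_, ?_⟩
      · by_cases hk : k + 1 = p <;> simp [S₁, hk]
      · by_cases hk : k = p <;> simp [S₂, hk]
    refine cycles_bypass _ _ none (by simp [fAc, S₁]) (by simp [fAc, S₂]) ?_
    rintro (_ | j) hj
    · exact absurd rfl hj
    · by_cases hjB : j ∈ B
      · simpa only [fAc, hjB, if_true] using main j
      · simpa only [fAc, hjB, if_false] using main (τ j)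
  rw [pdGenus, pdGenus, c₁, c₂, d₁, d₂, e₁, e₂]

/-- For a set `A` of chords with `c' ∈ A` and `c ∉ A`, the partial duals satisfy
`g_A(D₁) = g_A(D₂)` and `g_A(D₃) = g_A(D₄)`. -/
theorem pdGenus_eq_of_c'_not_c (n : ℕ) (hn : 2 ≤ n)
    (τ : ZMod (2 * n - 1) → ZMod (2 * n - 1)) (p q u : ZMod (2 * n - 1))
    (hτ : IsConfig n τ p q u)
    (φ₁ φ₂ φ₃ φ₄ : ZMod (2 * n - 1) → ZMod (2 * n))
    (x₁ x₂ x₃ x₄ : ZMod (2 * n))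
    (D₁ D₂ D₃ D₄ : ZMod (2 * n) → ZMod (2 * n))
    (h₁ : IsInsertedDiagram n τ u φ₁ x₁ D₁) (hx₁ : x₁ + 1 = φ₁ p)
    (h₂ : IsInsertedDiagram n τ u φ₂ x₂ D₂) (hx₂ : x₂ = φ₂ p + 1)
    (h₃ : IsInsertedDiagram n τ u φ₃ x₃ D₃) (hx₃ : x₃ + 1 = φ₃ q)
    (h₄ : IsInsertedDiagram n τ u φ₄ x₄ D₄) (hx₄ : x₄ = φ₄ q + 1)
    (B : Set (ZMod (2 * n - 1))) (hB : ∀ j ∈ B, τ j ∈ B)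
    (hc : p ∉ B) (hc' : u ∈ B) :
    pdGenus n D₁ (φ₁ '' B ∪ {x₁}) = pdGenus n D₂ (φ₂ '' B ∪ {x₂}) ∧
    pdGenus n D₃ (φ₃ '' B ∪ {x₃}) = pdGenus n D₄ (φ₄ '' B ∪ {x₄}) := by
  obtain ⟨hinv, hpq, -, -, -⟩ := hτ
  refine ⟨pdGenus_pair n hn τ p u hinv φ₁ φ₂ x₁ x₂ D₁ D₂ h₁ hx₁ h₂ hx₂ B hB hc hc',
    pdGenus_pair n hn τ q u hinv φ₃ φ₄ x₃ x₄ D₃ D₄ h₃ hx₃ h₄ hx₄ B hB ?_ hc'⟩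
  intro hq
  apply hc
  have := hB q hq
  rwa [← hpq, hinv p] at this
end

section
/- The partial-dual genus polynomial is invariant under rotation of the chord diagram: for every chord diagram σ of order n, ∂Γ_{r ∘ σ ∘ r⁻¹}(z) = ∂Γ_σ(z), where r ∘ σ ∘ r⁻¹ is the chord diagram obtained from σ by rotating all chord endpoints one step along the circle. -/
theorem cycles_conj_s11 {α : Type*} (e : α ≃ α) (f g : α → α) (h : ∀ i, g (e i) = e (f i)) :
    cycles g = cycles f := by
  unfold cycles
  refine (Nat.card_congr (Quot.congr e ?_)).symm
  intro a b
  rw [h]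
  exact e.injective.eq_iff.symm

theorem cycles_rot_shift (n : ℕ) (σ : ZMod (2 * n) → ZMod (2 * n))
    (A B : Set (ZMod (2 * n))) (hAB : ∀ i, i + 1 ∈ B ↔ i ∈ A) :
    cycles (rot n ∘ restrictTo (fun i => σ (i - 1) + 1) B) =
      cycles (rot n ∘ restrictTo σ A) := by
  apply cycles_conj_s11 (Equiv.addRight 1)
  intro i
  by_cases hi : i ∈ A <;> simp [rot, restrictTo, hAB, hi]

theorem pdGenus_shift (n : ℕ) (σ : ZMod (2 * n) → ZMod (2 * n))
    (A B : Set (ZMod (2 * n))) (hAB : ∀ i, i + 1 ∈ B ↔ i ∈ A) :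
    pdGenus n (fun i => σ (i - 1) + 1) B = pdGenus n σ A := by
  unfold pdGenus
  rw [cycles_rot_shift n σ A B hAB,
    cycles_rot_shift n σ Aᶜ Bᶜ (fun i => not_congr (hAB i))]

/-- The partial-dual genus polynomial is invariant under rotation of the chord diagram:
`∂Γ_{r ∘ σ ∘ r⁻¹} = ∂Γ_σ`, where `(r ∘ σ ∘ r⁻¹) i = σ (i - 1) + 1`. -/
theorem pdPoly_rotation_invariant (n : ℕ) (hn : 0 < n)
    (σ : ZMod (2 * n) → ZMod (2 * n))
    (hinv : Function.Involutive σ) (hfpf : ∀ i, σ i ≠ i) :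
    pdPoly n (fun i => σ (i - 1) + 1) = pdPoly n σ := by
  have h0 : n ≠ 0 := by omega
  unfold pdPoly
  rw [dif_neg h0, dif_neg h0]
  symm
  have hmem : ∀ (A : Finset (ZMod (2 * n))) (i : ZMod (2 * n)),
      i + 1 ∈ (Equiv.addRight (1 : ZMod (2 * n))).finsetCongr A ↔ i ∈ A := by
    intro A i
    simp [Equiv.finsetCongr_apply]
  refine Finset.sum_equiv (Equiv.addRight (1 : ZMod (2 * n))).finsetCongr ?_ ?_
  · intro A
    simp only [Finset.mem_filter, Finset.mem_univ, true_and]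
    constructor
    · intro h i hi
      rw [hmem]
      apply h
      rw [← hmem]
      simpa only [sub_add_cancel] using hi
    · intro h i hi
      have := h (i + 1) ((hmem A i).2 hi)
      rw [hmem] at this
      simpa only [add_sub_cancel_right] using this
  · intro A _
    rw [pdGenus_shift n σ (↑A) _ (fun i => by
      simpa only [Finset.mem_coe] using hmem A i)]
end
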